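/- arXiv:2111.04691 — 2 statements merged into one kernel-verified Lean document; each statement's English description precedes it below -/
import Mathlib

section
/- Let V: ℝ → [0,∞) be an Orlicz function and R ∈ (0,∞). For a bounded continuous λ: ℝ → ℝ let α(λ) ∈ (-∞,0) be the unique solution of ∫ V e^{α(λ)V+λ} dx = R ∫ e^{α(λ)V+λ} dx, and set Λ_V(λ) := φ_V(α(λ),λ) − α(λ)R − φ_V(α(0),0) + α(0)R, where α(0) corresponds to λ ≡ 0. Then for every probability measure μ on ℝ, the Legendre transform sup_{λ ∈ C_b(ℝ)} [ ∫_ℝ λ dμ − Λ_V(λ) ] equals I_V(μ), where I_V(μ) := H(μ | μ_{V,α(0)}) + α(0)[m_V(μ) − R] if m_V(μ) ≤ R and I_V(μ) := ∞ otherwise. Moreover I_V is strictly convex on the set of probability measures where it is finite. -/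
open MeasureTheory Real Filter Topology ENNReal Classical

noncomputable section

/-- An Orlicz function: convex, symmetric, vanishing only at `0`, nonnegative. -/
def IsOrlicz (V : ℝ → ℝ) : Prop :=
  ConvexOn ℝ Set.univ V ∧ (∀ x, V (-x) = V x) ∧ V 0 = 0 ∧ (∀ x, x ≠ 0 → 0 < V x) ∧
    (∀ x, 0 ≤ V x)

/-- `φ_V(α, λ) = log ∫ e^{α V(x) + λ(x)} dx`. -/
def phiV (V lam : ℝ → ℝ) (α : ℝ) : ℝ := Real.log (∫ x : ℝ, Real.exp (α * V x + lam x))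

/-- The Gibbs measure `μ_{V,β}` with Lebesgue density `e^{βV(x)} / ∫ e^{βV}`. -/
def gibbs (V : ℝ → ℝ) (β : ℝ) : Measure ℝ :=
  volume.withDensity fun x =>
    ENNReal.ofReal (Real.exp (β * V x) / ∫ t : ℝ, Real.exp (β * V t))

/-- Relative entropy `H(μ|ν)`, valued in `EReal`; it is `⊤` unless `μ ≪ ν` and the
log-density is `μ`-integrable. -/

def relEnt (μ ν : Measure ℝ) : EReal :=
  if μ ≪ ν ∧ Integrable (fun x => Real.log (μ.rnDeriv ν x).toReal) μ
  then ((∫ x, Real.log (μ.rnDeriv ν x).toReal ∂μ : ℝ) : EReal) else ⊤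

/-- The `V`-moment `m_V(μ) = ∫ V dμ`, as a lower integral in `[0,∞]`. -/
def mV (V : ℝ → ℝ) (μ : Measure ℝ) : ℝ≥0∞ := ∫⁻ x, ENNReal.ofReal (V x) ∂μ

/-- The rate function `I_V`. -/

def rateI (V : ℝ → ℝ) (R α₀ : ℝ) (μ : Measure ℝ) : EReal :=
  if mV V μ ≤ ENNReal.ofReal R
  then relEnt μ (gibbs V α₀) + ((α₀ * ((mV V μ).toReal - R) : ℝ) : EReal)
  else ⊤

/-- The type of bounded continuous test functions. -/
def Cb : Type := {f : ℝ → ℝ // Continuous f ∧ ∃ C : ℝ, ∀ x, |f x| ≤ C}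

/-! Fix `α₀ = α(0)` and let `γ` be the Gibbs measure with parameter `α₀`. Since `α(λ)` minimises
the convex function `b ↦ φ(b, λ) - b R`, the Legendre transform at `μ` is, up to a constant, the
supremum of `∫ λ dμ - φ(b, λ) + b R` over both `λ` and `b < 0`. It is at most `I(μ)` by the
Donsker–Varadhan inequality for `(b - α₀) V + λ` under `γ`. Conversely, suppose the supremum is
finite. The test functions `k min(V, n)` force `∫ V dμ ≤ R`, and the test functions `λ + (α₀ - b)
min(V, n)` with `n → ∞` and `b → 0⁻` remove the constraint, leaving the convex dual of `H(μ | γ)`;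
this is inverted by testing with the logarithm of a clipped density and applying Fatou's lemma.
Strict convexity is inherited from `r ↦ r log r`. -/

open InformationTheory BoundedContinuousFunction

lemma tendsto_min_of_tendsto_atTop {ι : Type*} {l : Filter ι} {u : ι → ℝ}
    (hu : Tendsto u l atTop) (x : ℝ) : Tendsto (fun i => min x (u i)) l (𝓝 x) :=
  tendsto_const_nhds.congr' <| (hu.eventually_ge_atTop x).mono fun _ hi => (min_eq_left hi).symm

/-- The retraction of `ℝ` onto `[b⁻¹, b]`. It truncates a density so that its logarithm becomes a
bounded test function. -/
def clip (b r : ℝ) : ℝ := max b⁻¹ (min r b)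

section Clip

variable {b r : ℝ}

lemma inv_le_clip (b r : ℝ) : b⁻¹ ≤ clip b r := le_max_left _ _

lemma clip_le (hb : 1 ≤ b) (r : ℝ) : clip b r ≤ b :=
  max_le ((inv_le_one_of_one_le₀ hb).trans hb) (min_le_right _ _)

lemma clip_pos (hb : 1 ≤ b) (r : ℝ) : 0 < clip b r :=
  (inv_pos.2 (zero_lt_one.trans_le hb)).trans_le (inv_le_clip b r)

lemma measurable_clip (b : ℝ) : Measurable (clip b) :=
  measurable_const.max (measurable_id.min measurable_const)

lemma abs_log_clip_le (hb : 1 ≤ b) (r : ℝ) : |Real.log (clip b r)| ≤ Real.log b := by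
  refine abs_le.2 ⟨?_, Real.log_le_log (clip_pos hb r) (clip_le hb r)⟩
  rw [← Real.log_inv]
  exact Real.log_le_log (inv_pos.2 (zero_lt_one.trans_le hb)) (inv_le_clip b r)

lemma clip_mul_log_clip_le (hb : 1 ≤ b) (r : ℝ) :
    clip b r * Real.log (clip b r) ≤ r * Real.log (clip b r) := by
  have hinv : b⁻¹ ≤ 1 := inv_le_one_of_one_le₀ hb
  rcases le_total r b⁻¹ with hr | hr
  · have hclip : clip b r = b⁻¹ := by
      rw [clip, min_eq_left (hr.trans (hinv.trans hb)), max_eq_left hr]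
    rw [hclip]
    exact mul_le_mul_of_nonpos_right hr (Real.log_nonpos (by positivity) hinv)
  rcases le_total r b with hr' | hr'
  · rw [show clip b r = r by rw [clip, min_eq_left hr', max_eq_right hr]]
  · rw [show clip b r = b by rw [clip, min_eq_right hr', max_eq_right (hinv.trans hb)]]
    exact mul_le_mul_of_nonneg_right hr' (Real.log_nonneg hb)

lemma clip_sub_one_le_mul_log_clip (hb : 1 ≤ b) (r : ℝ) :
    clip b r - 1 ≤ r * Real.log (clip b r) := by
  have h := klFun_nonneg (clip_pos hb r).le
  rw [klFun] at h
  linarith [clip_mul_log_clip_le hb r]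

lemma tendsto_clip (hr : 0 ≤ r) : Tendsto (fun n : ℕ => clip (n + 1) r) atTop (𝓝 r) := by
  have hatTop : Tendsto (fun n : ℕ => (n : ℝ) + 1) atTop atTop :=
    tendsto_atTop_add_const_right _ _ tendsto_natCast_atTop_atTop
  simpa only [clip, Function.comp_apply, max_eq_right hr] using
    (tendsto_inv_atTop_zero.comp hatTop).max (tendsto_min_of_tendsto_atTop hatTop r)

end Clip

section Duality

variable {α : Type*} [MeasurableSpace α] {μ ν : Measure α} {K : ℝ}

/-- `K` bounds the functional `f ↦ ∫ f dμ - ∫ (exp f - 1) dν`, the convex dual of `klDiv μ ν`, over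
all bounded measurable `f`. -/
def IsFenchelBound (μ ν : Measure α) (K : ℝ) : Prop :=
  ∀ (f : α → ℝ) (C : ℝ), Measurable f → (∀ x, |f x| ≤ C) →
    ∫ x, f x ∂μ - ∫ x, (Real.exp (f x) - 1) ∂ν ≤ K

namespace IsFenchelBound

lemma nonneg (h : IsFenchelBound μ ν K) : 0 ≤ K := by
  simpa using h (fun _ => 0) 0 measurable_const (by simp)

lemma absolutelyContinuous [IsFiniteMeasure μ] (h : IsFenchelBound μ ν K) : μ ≪ ν := by
  refine .mk fun s hs hνs => ?_
  have hbound (k : ℕ) : k * μ.real s ≤ K := by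
    have hzero : (fun x => Real.exp (s.indicator (fun _ => (k : ℝ)) x) - 1) =ᵐ[ν] 0 := by
      filter_upwards [measure_eq_zero_iff_ae_notMem.1 hνs] with x hx
      simp [hx]
    have hk := h (s.indicator fun _ => (k : ℝ)) k (measurable_const.indicator hs)
      fun x => by by_cases hx : x ∈ s <;> simp [hx]
    rwa [integral_indicator_const _ hs, integral_eq_zero_of_ae hzero, sub_zero, smul_eq_mul,
      mul_comm] at hk
  by_contra hμs
  have hpos : 0 < μ.real s := ENNReal.toReal_pos hμs (measure_ne_top μ s)
  obtain ⟨k, hk⟩ := exists_nat_gt (K / μ.real s)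
  exact (((div_lt_iff₀ hpos).1 hk).trans_le (hbound k)).false

lemma lintegral_rnDeriv_mul_log_clip_le [IsFiniteMeasure μ] [IsFiniteMeasure ν]
    (h : IsFenchelBound μ ν K) {b : ℝ} (hb : 1 ≤ b) :
    ∫⁻ x, ENNReal.ofReal ((μ.rnDeriv ν x).toReal * Real.log (clip b (μ.rnDeriv ν x).toReal)
      - (clip b (μ.rnDeriv ν x).toReal - 1)) ∂ν ≤ ENNReal.ofReal K := by
  set r : α → ℝ := fun x => (μ.rnDeriv ν x).toReal
  have hmeas : Measurable fun x => clip b (r x) :=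
    (measurable_clip b).comp (μ.measurable_rnDeriv ν).ennreal_toReal
  have hexp (x : α) : Real.exp (Real.log (clip b (r x))) = clip b (r x) :=
    Real.exp_log (clip_pos hb _)
  have hlogμ : Integrable (fun x => Real.log (clip b (r x))) μ :=
    .of_bound hmeas.log.aestronglyMeasurable _ (ae_of_all _ fun x => abs_log_clip_le hb _)
  have hlogν : Integrable (fun x => r x * Real.log (clip b (r x))) ν :=
    (integrable_toReal_rnDeriv_mul_iff h.absolutelyContinuous).2 hlogμ
  have hclip : Integrable (fun x => clip b (r x) - 1) ν := by
    refine .sub (.of_bound hmeas.aestronglyMeasurable b (ae_of_all _ fun x => ?_))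
      (integrable_const 1)
    rw [Real.norm_of_nonneg (clip_pos hb _).le]
    exact clip_le hb _
  have hK := h _ _ hmeas.log fun x => abs_log_clip_le hb _
  simp only [hexp] at hK
  rw [← integral_toReal_rnDeriv_mul h.absolutelyContinuous, ← integral_sub hlogν hclip] at hK
  have hnonneg (x : α) : 0 ≤ r x * Real.log (clip b (r x)) - (clip b (r x) - 1) :=
    sub_nonneg.2 (clip_sub_one_le_mul_log_clip hb _)
  exact (ofReal_integral_eq_lintegral_ofReal (hlogν.sub hclip) (ae_of_all _ hnonneg)).symm.trans_le
    (ENNReal.ofReal_le_ofReal hK)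

theorem klDiv_le [IsFiniteMeasure μ] [IsFiniteMeasure ν] (h : IsFenchelBound μ ν K) :
    klDiv μ ν ≤ ENNReal.ofReal K := by
  set r : α → ℝ := fun x => (μ.rnDeriv ν x).toReal
  have hr : Measurable r := (μ.measurable_rnDeriv ν).ennreal_toReal
  set F : ℕ → α → ℝ≥0∞ := fun n x =>
    ENNReal.ofReal (r x * Real.log (clip (n + 1) (r x)) - (clip (n + 1) (r x) - 1))
  have hF (n : ℕ) : Measurable (F n) :=
    have hclip := (measurable_clip ((n : ℝ) + 1)).comp hr
    ((hr.mul hclip.log).sub (hclip.sub_const 1)).ennreal_ofReal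
  have hlim (x : α) : Tendsto (F · x) atTop (𝓝 (ENNReal.ofReal (klFun (r x)))) := by
    have hclip := tendsto_clip (r := r x) toReal_nonneg
    rw [klFun, add_sub_assoc, ← neg_sub (r x) 1, ← sub_eq_add_neg]
    refine ENNReal.tendsto_ofReal (Tendsto.sub ?_ (hclip.sub_const 1))
    rcases eq_or_ne (r x) 0 with h0 | h0
    · simp only [h0, zero_mul, tendsto_const_nhds]
    · exact (hclip.log h0).const_mul _
  calc klDiv μ ν = ∫⁻ x, liminf (F · x) atTop ∂ν := by
        rw [klDiv_eq_lintegral_klFun_of_ac h.absolutelyContinuous]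
        exact lintegral_congr fun x => (hlim x).liminf_eq.symm
    _ ≤ liminf (fun n => ∫⁻ x, F n x ∂ν) atTop := lintegral_liminf_le hF
    _ ≤ ENNReal.ofReal K := liminf_le_of_le (by isBoundedDefault) fun c hc =>
        let ⟨n, hn⟩ := hc.exists
        hn.trans (h.lintegral_rnDeriv_mul_log_clip_le (by simp))

end IsFenchelBound

lemma toReal_rnDeriv_convexCombination (μ ν γ : Measure α) [IsFiniteMeasure μ] [IsFiniteMeasure ν]
    [SigmaFinite γ] {t : ℝ} (ht : t ∈ Set.Icc (0 : ℝ) 1) :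
    ∀ᵐ x ∂γ, ((ENNReal.ofReal t • μ + ENNReal.ofReal (1 - t) • ν).rnDeriv γ x).toReal
      = t * (μ.rnDeriv γ x).toReal + (1 - t) * (ν.rnDeriv γ x).toReal := by
  have : IsFiniteMeasure (ENNReal.ofReal t • μ) := μ.smul_finite ENNReal.ofReal_ne_top
  have : IsFiniteMeasure (ENNReal.ofReal (1 - t) • ν) := ν.smul_finite ENNReal.ofReal_ne_top
  filter_upwards [Measure.rnDeriv_add (ENNReal.ofReal t • μ) (ENNReal.ofReal (1 - t) • ν) γ,
    Measure.rnDeriv_smul_left_of_ne_top μ γ (r := ENNReal.ofReal t) ENNReal.ofReal_ne_top,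
    Measure.rnDeriv_smul_left_of_ne_top ν γ (r := ENNReal.ofReal (1 - t)) ENNReal.ofReal_ne_top,
    μ.rnDeriv_ne_top γ, ν.rnDeriv_ne_top γ] with x hadd hμ hν hμtop hνtop
  rw [hadd, Pi.add_apply, hμ, hν, Pi.smul_apply, Pi.smul_apply, smul_eq_mul, smul_eq_mul,
    ENNReal.toReal_add (ENNReal.mul_ne_top ENNReal.ofReal_ne_top hμtop)
      (ENNReal.mul_ne_top ENNReal.ofReal_ne_top hνtop),
    ENNReal.toReal_mul, ENNReal.toReal_mul, ENNReal.toReal_ofReal ht.1,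
    ENNReal.toReal_ofReal (sub_nonneg.2 ht.2)]

lemma frequently_toReal_rnDeriv_ne {γ : Measure α} [IsFiniteMeasure μ] [IsFiniteMeasure ν]
    [SigmaFinite γ] (hμ : μ ≪ γ) (hν : ν ≪ γ) (hne : μ ≠ ν) :
    ∃ᵐ x ∂γ, (μ.rnDeriv γ x).toReal ≠ (ν.rnDeriv γ x).toReal := by
  refine fun heq => hne ?_
  rw [← Measure.withDensity_rnDeriv_eq μ γ hμ, ← Measure.withDensity_rnDeriv_eq ν γ hν]
  refine withDensity_congr_ae ?_
  filter_upwards [heq, μ.rnDeriv_ne_top γ, ν.rnDeriv_ne_top γ] with x hx hμtop hνtop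
  exact (ENNReal.toReal_eq_toReal_iff' hμtop hνtop).1 (not_not.1 hx)

lemma ofReal_convexCombination {a b t : ℝ} (ha : 0 ≤ a) (hb : 0 ≤ b) (ht : t ∈ Set.Icc (0 : ℝ) 1) :
    ENNReal.ofReal (t * a + (1 - t) * b)
      = ENNReal.ofReal t * ENNReal.ofReal a + ENNReal.ofReal (1 - t) * ENNReal.ofReal b := by
  have ht' : 0 ≤ 1 - t := sub_nonneg.2 ht.2
  rw [ENNReal.ofReal_add (mul_nonneg ht.1 ha) (mul_nonneg ht' hb), ENNReal.ofReal_mul ht.1,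
    ENNReal.ofReal_mul ht']

lemma ofReal_klFun_convexCombination_le {r s t : ℝ} (hr : 0 ≤ r) (hs : 0 ≤ s)
    (ht : t ∈ Set.Icc (0 : ℝ) 1) :
    ENNReal.ofReal (klFun (t * r + (1 - t) * s))
      ≤ ENNReal.ofReal t * ENNReal.ofReal (klFun r)
        + ENNReal.ofReal (1 - t) * ENNReal.ofReal (klFun s) := by
  rw [← ofReal_convexCombination (klFun_nonneg hr) (klFun_nonneg hs) ht]
  exact ENNReal.ofReal_le_ofReal
    (convexOn_klFun.2 hr hs ht.1 (sub_nonneg.2 ht.2) (add_sub_cancel t 1))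

lemma ofReal_klFun_convexCombination_lt {r s t : ℝ} (hr : 0 ≤ r) (hs : 0 ≤ s) (hne : r ≠ s)
    (ht : t ∈ Set.Ioo (0 : ℝ) 1) :
    ENNReal.ofReal (klFun (t * r + (1 - t) * s))
      < ENNReal.ofReal t * ENNReal.ofReal (klFun r)
        + ENNReal.ofReal (1 - t) * ENNReal.ofReal (klFun s) := by
  have ht₀ : 0 < t := ht.1
  have ht₁ : 0 < 1 - t := sub_pos.2 ht.2
  have hlt := strictConvexOn_klFun.2 hr hs hne ht₀ ht₁ (add_sub_cancel t 1)
  rw [← ofReal_convexCombination (klFun_nonneg hr) (klFun_nonneg hs) (Set.Ioo_subset_Icc_self ht)]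
  exact (ENNReal.ofReal_lt_ofReal_iff ((klFun_nonneg (by positivity)).trans_lt hlt)).2 hlt

theorem klDiv_convexCombination_lt {γ : Measure α} [IsFiniteMeasure μ] [IsFiniteMeasure ν]
    [IsFiniteMeasure γ] (hne : μ ≠ ν) (hμ : klDiv μ γ ≠ ⊤) (hν : klDiv ν γ ≠ ⊤) {t : ℝ}
    (ht : t ∈ Set.Ioo (0 : ℝ) 1) :
    klDiv (ENNReal.ofReal t • μ + ENNReal.ofReal (1 - t) • ν) γ
      < ENNReal.ofReal t * klDiv μ γ + ENNReal.ofReal (1 - t) * klDiv ν γ := by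
  set ρ := ENNReal.ofReal t • μ + ENNReal.ofReal (1 - t) • ν
  have hμac : μ ≪ γ := (klDiv_ne_top_iff.1 hμ).1
  have hνac : ν ≪ γ := (klDiv_ne_top_iff.1 hν).1
  have hρac : ρ ≪ γ := (hμac.smul_left _).add_left (hνac.smul_left _)
  have : IsFiniteMeasure (ENNReal.ofReal t • μ) := μ.smul_finite ENNReal.ofReal_ne_top
  have : IsFiniteMeasure (ENNReal.ofReal (1 - t) • ν) := ν.smul_finite ENNReal.ofReal_ne_top
  have hmeas (η : Measure α) :
      Measurable fun x => ENNReal.ofReal (klFun (η.rnDeriv γ x).toReal) :=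
    (measurable_klFun.comp (η.measurable_rnDeriv γ).ennreal_toReal).ennreal_ofReal
  have hdens := toReal_rnDeriv_convexCombination μ ν γ (Set.Ioo_subset_Icc_self ht)
  have hrhs : ENNReal.ofReal t * klDiv μ γ + ENNReal.ofReal (1 - t) * klDiv ν γ ≠ ⊤ :=
    ENNReal.add_ne_top.2 ⟨ENNReal.mul_ne_top ENNReal.ofReal_ne_top hμ,
      ENNReal.mul_ne_top ENNReal.ofReal_ne_top hν⟩
  have hle : ∀ᵐ x ∂γ, ENNReal.ofReal (klFun (ρ.rnDeriv γ x).toReal)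
      ≤ ENNReal.ofReal t * ENNReal.ofReal (klFun (μ.rnDeriv γ x).toReal)
        + ENNReal.ofReal (1 - t) * ENNReal.ofReal (klFun (ν.rnDeriv γ x).toReal) := by
    filter_upwards [hdens] with x hx
    rw [hx]
    exact ofReal_klFun_convexCombination_le toReal_nonneg toReal_nonneg (Set.Ioo_subset_Icc_self ht)
  rw [klDiv_eq_lintegral_klFun_of_ac hμac, klDiv_eq_lintegral_klFun_of_ac hνac,
    ← lintegral_const_mul _ (hmeas μ), ← lintegral_const_mul _ (hmeas ν),
    ← lintegral_add_left ((hmeas μ).const_mul _)] at hrhs ⊢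
  rw [klDiv_eq_lintegral_klFun_of_ac hρac]
  refine lintegral_strict_mono_of_ae_le_of_frequently_ae_lt
    (((hmeas μ).const_mul _).add ((hmeas ν).const_mul _)).aemeasurable
    (ne_top_of_le_ne_top hrhs (lintegral_mono_ae hle)) hle ?_
  refine ((frequently_toReal_rnDeriv_ne hμac hνac hne).and_eventually hdens).mono
    fun x ⟨hx, hxdens⟩ => ?_
  rw [hxdens]
  exact (ofReal_klFun_convexCombination_lt toReal_nonneg toReal_nonneg hx ht).ne

end Duality

section BoundedContinuous

variable {E : Type*} [TopologicalSpace E] [TopologicalSpace.PseudoMetrizableSpace E]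
  [MeasurableSpace E] [BorelSpace E]

lemma abs_exp_sub_exp_le {a b C : ℝ} (ha : |a| ≤ C) (hb : |b| ≤ C) :
    |Real.exp a - Real.exp b| ≤ Real.exp C * |a - b| := by
  refine (convex_Icc (-C) C).norm_image_sub_le_of_norm_deriv_le
    (fun _ _ => Real.differentiableAt_exp) (fun x hx => ?_) (abs_le.1 hb) (abs_le.1 ha)
  rw [Real.deriv_exp, Real.norm_of_nonneg (Real.exp_pos x).le]
  exact Real.exp_le_exp.2 hx.2

lemma exists_boundedContinuous_abs_le_integral_abs_sub_le {ρ : Measure E}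
    [IsFiniteMeasure ρ] {f : E → ℝ} (hf : Measurable f) {C : ℝ} (hC : 0 ≤ C)
    (hfC : ∀ x, |f x| ≤ C) {ε : ℝ} (hε : 0 < ε) :
    ∃ g : E →ᵇ ℝ, (∀ x, |g x| ≤ C) ∧ ∫ x, |f x - g x| ∂ρ ≤ ε := by
  have hfint : Integrable f ρ := .of_bound hf.aestronglyMeasurable C (ae_of_all _ hfC)
  obtain ⟨g, hg, hgint⟩ := hfint.exists_boundedContinuous_integral_sub_le hε
  have hCC : -C ≤ C := neg_le_self hC
  have hproj : LipschitzWith 1 (Subtype.val ∘ Set.projIcc (-C) C hCC) := by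
    simpa only [mul_one] using (LipschitzWith.subtype_val _).comp (LipschitzWith.projIcc hCC)
  refine ⟨g.comp _ hproj, fun x => abs_le.2 (Set.projIcc (-C) C hCC (g x)).2, hg.trans' ?_⟩
  refine integral_mono_of_nonneg (ae_of_all _ fun x => abs_nonneg _) (hfint.sub hgint).norm
    (ae_of_all _ fun x => ?_)
  have hfx : (Set.projIcc (-C) C hCC (f x) : ℝ) = f x :=
    congrArg Subtype.val (Set.projIcc_of_mem hCC (abs_le.1 (hfC x)))
  calc |f x - Set.projIcc (-C) C hCC (g x)|
      = |(Set.projIcc (-C) C hCC (f x) : ℝ) - Set.projIcc (-C) C hCC (g x)| := by rw [hfx]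
    _ ≤ |f x - g x| := Set.abs_projIcc_sub_projIcc hCC

lemma isFenchelBound_of_forall_boundedContinuous {μ ν : Measure E}
    [IsFiniteMeasure μ] [IsFiniteMeasure ν] {K : ℝ}
    (h : ∀ g : E →ᵇ ℝ, ∫ x, g x ∂μ - ∫ x, (Real.exp (g x) - 1) ∂ν ≤ K) :
    IsFenchelBound μ ν K := by
  intro f C hf hfC
  replace hfC (x : E) : |f x| ≤ |C| := (hfC x).trans (le_abs_self C)
  refine le_of_forall_pos_le_add fun ε hε => ?_
  obtain ⟨g, hgC, hfg⟩ := exists_boundedContinuous_abs_le_integral_abs_sub_le (ρ := μ + ν) hf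
    (abs_nonneg C) hfC (div_pos hε (Real.exp_pos |C|))
  have hbdd {ρ : Measure E} [IsFiniteMeasure ρ] {u : E → ℝ} (hu : Measurable u)
      (huC : ∀ x, |u x| ≤ |C|) : Integrable u ρ ∧ Integrable (fun x => Real.exp (u x) - 1) ρ :=
    ⟨.of_bound hu.aestronglyMeasurable _ (ae_of_all _ huC),
      .sub (.of_bound hu.exp.aestronglyMeasurable (Real.exp |C|) (ae_of_all _ fun x => by
        simpa using (abs_le.1 (huC x)).2)) (integrable_const 1)⟩
  have hdiff {ρ : Measure E} [IsFiniteMeasure ρ] : Integrable (fun x => |f x - g x|) ρ :=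
    ((hbdd hf hfC).1.sub (hbdd g.continuous.measurable hgC).1).abs
  have hμ : ∫ x, f x ∂μ - ∫ x, g x ∂μ ≤ Real.exp |C| * ∫ x, |f x - g x| ∂μ := by
    rw [← integral_sub (hbdd hf hfC).1 (hbdd g.continuous.measurable hgC).1]
    refine (integral_mono ((hbdd hf hfC).1.sub (hbdd g.continuous.measurable hgC).1) hdiff
      fun x => le_abs_self _).trans (le_mul_of_one_le_left (by positivity) ?_)
    exact Real.one_le_exp (abs_nonneg C)
  have hν : ∫ x, (Real.exp (g x) - 1) ∂ν - ∫ x, (Real.exp (f x) - 1) ∂ν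
      ≤ Real.exp |C| * ∫ x, |f x - g x| ∂ν := by
    rw [← integral_sub (hbdd g.continuous.measurable hgC).2 (hbdd hf hfC).2, ← integral_const_mul]
    refine integral_mono ((hbdd g.continuous.measurable hgC).2.sub (hbdd hf hfC).2)
      (hdiff.const_mul _) fun x => ?_
    simp only [sub_sub_sub_cancel_right, abs_sub_comm (f x)]
    exact (le_abs_self _).trans (abs_exp_sub_exp_le (hgC x) (hfC x))
  rw [integral_add_measure hdiff hdiff, le_div_iff₀' (Real.exp_pos _)] at hfg
  linarith [h g]

end BoundedContinuous

section Tilted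

variable {α : Type*} [MeasurableSpace α] {m μ ν : Measure α} {f g : α → ℝ}

lemma log_integral_exp_tilted [NeZero m] (hf : Integrable (fun x => Real.exp (f x)) m)
    (hfg : Integrable (fun x => Real.exp (f x + g x)) m) :
    Real.log (∫ x, Real.exp (g x) ∂m.tilted f)
      = Real.log (∫ x, Real.exp (f x + g x) ∂m) - Real.log (∫ x, Real.exp (f x) ∂m) := by
  rw [integral_exp_tilted]
  exact Real.log_div (integral_exp_pos hfg).ne' (integral_exp_pos hf).ne'

lemma integrable_exp_tilted (hf : Integrable (fun x => Real.exp (f x)) m)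
    (hfg : Integrable (fun x => Real.exp (f x + g x)) m) :
    Integrable (fun x => Real.exp (g x)) (m.tilted f) := by
  rw [integrable_tilted_iff hf]
  simpa only [smul_eq_mul, ← Real.exp_add] using hfg

theorem integral_sub_log_integral_exp_le_toReal_klDiv [IsProbabilityMeasure μ]
    [IsProbabilityMeasure ν] (h : klDiv μ ν ≠ ⊤) (hfμ : Integrable f μ)
    (hfν : Integrable (fun x => Real.exp (f x)) ν) :
    ∫ x, f x ∂μ - Real.log (∫ x, Real.exp (f x) ∂ν) ≤ (klDiv μ ν).toReal := by
  obtain ⟨hac, hllr⟩ := klDiv_ne_top_iff.1 h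
  have := isProbabilityMeasure_tilted hfν
  have hnonneg := integral_llr_add_sub_measure_univ_nonneg
    (hac.trans (absolutelyContinuous_tilted hfν)) (integrable_llr_tilted_right hac hfμ hllr hfν)
  rw [integral_llr_tilted_right hac hfμ hfν hllr, probReal_univ, probReal_univ] at hnonneg
  rw [toReal_klDiv_of_measure_eq hac (by simp only [measure_univ])]
  linarith

end Tilted

/-- `log ∫ exp (a V + λ) dm`, the logarithmic partition function at inverse temperature `-a` of the
potential `V` perturbed by `λ`. For Lebesgue measure on `ℝ` it is `phiV`. -/
def logPartition {E : Type*} [MeasurableSpace E] (m : Measure E) (V lam : E → ℝ) (a : ℝ) : ℝ :=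
  Real.log (∫ x, Real.exp (a * V x + lam x) ∂m)

/-- The rate function `I_V` relative to an arbitrary reference measure `m`; the Gibbs measure with
potential `V` at parameter `a` is written as an exponential tilt of `m`. -/
def rateFunction {E : Type*} [MeasurableSpace E] (m : Measure E) (V : E → ℝ) (R a : ℝ)
    (μ : Measure E) : EReal :=
  if ∫⁻ x, ENNReal.ofReal (V x) ∂μ ≤ ENNReal.ofReal R
  then (klDiv μ (m.tilted fun x => a * V x) : EReal) + ((a * (∫ x, V x ∂μ - R) : ℝ) : EReal)
  else ⊤

section RateFunction

variable {E : Type*} [MeasurableSpace E] {m μ ν : Measure E} {V : E → ℝ} {R a : ℝ}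

lemma rateFunction_eq_coe (hμ : ∫⁻ x, ENNReal.ofReal (V x) ∂μ ≤ ENNReal.ofReal R)
    (hkl : klDiv μ (m.tilted fun x => a * V x) ≠ ⊤) :
    rateFunction m V R a μ
      = (((klDiv μ (m.tilted fun x => a * V x)).toReal + a * (∫ x, V x ∂μ - R) : ℝ) : EReal) := by
  rw [rateFunction, if_pos hμ, EReal.coe_add, EReal.coe_ennreal_toReal hkl]

lemma rateFunction_ne_top_iff : rateFunction m V R a μ ≠ ⊤ ↔
    ∫⁻ x, ENNReal.ofReal (V x) ∂μ ≤ ENNReal.ofReal R ∧ klDiv μ (m.tilted fun x => a * V x) ≠ ⊤ := by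
  refine ⟨fun h => ?_, fun ⟨hμ, hkl⟩ => rateFunction_eq_coe hμ hkl ▸ EReal.coe_ne_top _⟩
  have hμ : ∫⁻ x, ENNReal.ofReal (V x) ∂μ ≤ ENNReal.ofReal R := by
    by_contra hμ
    exact h (if_neg hμ)
  refine ⟨hμ, fun hkl => h ?_⟩
  rw [rateFunction, if_pos hμ, hkl, EReal.coe_ennreal_top, EReal.top_add_coe]

lemma integrable_of_lintegral_ofReal_le (hV : Measurable V) (hV₀ : ∀ x, 0 ≤ V x)
    (hμ : ∫⁻ x, ENNReal.ofReal (V x) ∂μ ≤ ENNReal.ofReal R) : Integrable V μ :=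
  (lintegral_ofReal_ne_top_iff_integrable hV.aestronglyMeasurable (ae_of_all _ hV₀)).1
    (ne_top_of_le_ne_top ENNReal.ofReal_ne_top hμ)

lemma integral_le_of_lintegral_ofReal_le (hV : Measurable V) (hV₀ : ∀ x, 0 ≤ V x) (hR : 0 ≤ R)
    (hμ : ∫⁻ x, ENNReal.ofReal (V x) ∂μ ≤ ENNReal.ofReal R) : ∫ x, V x ∂μ ≤ R := by
  rw [integral_eq_lintegral_of_nonneg_ae (ae_of_all _ hV₀) hV.aestronglyMeasurable]
  exact ENNReal.toReal_le_of_le_ofReal hR hμ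

lemma lintegral_ofReal_le_of_forall_integral_min_le [IsFiniteMeasure μ] (hV : Measurable V)
    (hV₀ : ∀ x, 0 ≤ V x) (h : ∀ n : ℕ, ∫ x, min (V x) n ∂μ ≤ R) :
    ∫⁻ x, ENNReal.ofReal (V x) ∂μ ≤ ENNReal.ofReal R := by
  have hmeas (n : ℕ) : Measurable fun x => min (V x) (n : ℝ) := hV.min measurable_const
  have hmin₀ (n : ℕ) (x : E) : 0 ≤ min (V x) (n : ℝ) := le_min (hV₀ x) n.cast_nonneg
  have hlim := lintegral_tendsto_of_tendsto_of_monotone (μ := μ)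
    (fun n => (hmeas n).ennreal_ofReal.aemeasurable)
    (ae_of_all _ fun x n k hnk => ENNReal.ofReal_le_ofReal (min_le_min_left _ (Nat.cast_le.2 hnk)))
    (ae_of_all _ fun x => ENNReal.tendsto_ofReal
      (tendsto_min_of_tendsto_atTop tendsto_natCast_atTop_atTop (V x)))
  refine le_of_tendsto' hlim fun n => ?_
  rw [← ofReal_integral_eq_lintegral_ofReal _ (ae_of_all _ (hmin₀ n))]
  · exact ENNReal.ofReal_le_ofReal (h n)
  · refine .of_bound (hmeas n).aestronglyMeasurable n (ae_of_all _ fun x => ?_)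
    rw [Real.norm_of_nonneg (hmin₀ n x)]
    exact min_le_right _ _

lemma lintegral_convexCombination_le {f : E → ℝ≥0∞} {c : ℝ≥0∞} (hμ : ∫⁻ x, f x ∂μ ≤ c)
    (hν : ∫⁻ x, f x ∂ν ≤ c) {t : ℝ} (ht : t ∈ Set.Icc (0 : ℝ) 1) :
    ∫⁻ x, f x ∂(ENNReal.ofReal t • μ + ENNReal.ofReal (1 - t) • ν) ≤ c := by
  rw [lintegral_add_measure, lintegral_smul_measure, lintegral_smul_measure, smul_eq_mul,
    smul_eq_mul]
  calc _ ≤ ENNReal.ofReal t * c + ENNReal.ofReal (1 - t) * c := by gcongr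
    _ = c := by
        rw [← add_mul, ← ENNReal.ofReal_add ht.1 (sub_nonneg.2 ht.2), add_sub_cancel,
          ENNReal.ofReal_one, one_mul]

lemma integral_convexCombination {f : E → ℝ} (hμ : Integrable f μ) (hν : Integrable f ν) {t : ℝ}
    (ht : t ∈ Set.Icc (0 : ℝ) 1) :
    ∫ x, f x ∂(ENNReal.ofReal t • μ + ENNReal.ofReal (1 - t) • ν)
      = t * ∫ x, f x ∂μ + (1 - t) * ∫ x, f x ∂ν := by
  rw [integral_add_measure (hμ.smul_measure ENNReal.ofReal_ne_top)
      (hν.smul_measure ENNReal.ofReal_ne_top), integral_smul_measure, integral_smul_measure,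
    ENNReal.toReal_ofReal ht.1, ENNReal.toReal_ofReal (sub_nonneg.2 ht.2), smul_eq_mul, smul_eq_mul]

lemma isProbabilityMeasure_convexCombination [IsProbabilityMeasure μ] [IsProbabilityMeasure ν]
    {t : ℝ} (ht : t ∈ Set.Icc (0 : ℝ) 1) :
    IsProbabilityMeasure (ENNReal.ofReal t • μ + ENNReal.ofReal (1 - t) • ν) :=
  ⟨by simp [← ENNReal.ofReal_add ht.1 (sub_nonneg.2 ht.2)]⟩

theorem rateFunction_convexCombination_lt (hV : Measurable V) (hV₀ : ∀ x, 0 ≤ V x)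
    [IsFiniteMeasure μ] [IsFiniteMeasure ν] (hne : μ ≠ ν)
    (hμ : rateFunction m V R a μ ≠ ⊤) (hν : rateFunction m V R a ν ≠ ⊤) {t : ℝ}
    (ht : t ∈ Set.Ioo (0 : ℝ) 1) :
    rateFunction m V R a (ENNReal.ofReal t • μ + ENNReal.ofReal (1 - t) • ν)
      < ((t * (rateFunction m V R a μ).toReal
        + (1 - t) * (rateFunction m V R a ν).toReal : ℝ) : EReal) := by
  set γ := m.tilted fun x => a * V x
  have ht₀ : 0 ≤ t := ht.1.le
  have ht₁ : 0 ≤ 1 - t := sub_nonneg.2 ht.2.le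
  obtain ⟨hμm, hμkl⟩ := rateFunction_ne_top_iff.1 hμ
  obtain ⟨hνm, hνkl⟩ := rateFunction_ne_top_iff.1 hν
  have hmean := integral_convexCombination (integrable_of_lintegral_ofReal_le hV hV₀ hμm)
    (integrable_of_lintegral_ofReal_le hV hV₀ hνm) (Set.Ioo_subset_Icc_self ht)
  have hlt := klDiv_convexCombination_lt hne hμkl hνkl ht
  have hlt' : (klDiv (ENNReal.ofReal t • μ + ENNReal.ofReal (1 - t) • ν) γ).toReal
      < t * (klDiv μ γ).toReal + (1 - t) * (klDiv ν γ).toReal := by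
    have hμt := ENNReal.mul_ne_top (ENNReal.ofReal_ne_top (r := t)) hμkl
    have hνt := ENNReal.mul_ne_top (ENNReal.ofReal_ne_top (r := 1 - t)) hνkl
    simpa only [ENNReal.toReal_add hμt hνt, ENNReal.toReal_mul, ENNReal.toReal_ofReal ht₀,
      ENNReal.toReal_ofReal ht₁] using
      ENNReal.toReal_strict_mono (ENNReal.add_ne_top.2 ⟨hμt, hνt⟩) hlt
  rw [rateFunction_eq_coe
    (lintegral_convexCombination_le hμm hνm (Set.Ioo_subset_Icc_self ht)) hlt.ne_top,
    rateFunction_eq_coe hμm hμkl, rateFunction_eq_coe hνm hνkl, EReal.toReal_coe,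
    EReal.toReal_coe, EReal.coe_lt_coe_iff, hmean]
  linarith

end RateFunction

/-- A confining potential on `E`: a nonnegative continuous function all of whose Boltzmann weights
`exp (a V)`, `a < 0`, are integrable with respect to the reference measure `m`. -/
structure IsConfining {E : Type*} [TopologicalSpace E] [MeasurableSpace E] (V : E → ℝ)
    (m : Measure E) : Prop where
  continuous : Continuous V
  nonneg : ∀ x, 0 ≤ V x
  integrable_exp_mul : ∀ {a : ℝ}, a < 0 → Integrable (fun x => Real.exp (a * V x)) m

/-- `K` bounds the functional `(λ, b) ↦ ∫ λ dμ - (log ∫ exp (b V + λ) dm - b R)` over all bounded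
continuous `λ` and all `b < 0`. The supremum over `b` for fixed `λ` is attained at `α(λ)`. -/
def IsDualBound {E : Type*} [TopologicalSpace E] [MeasurableSpace E] (m : Measure E) (V : E → ℝ)
    (R : ℝ) (μ : Measure E) (K : ℝ) : Prop :=
  ∀ (lam : E →ᵇ ℝ) (b : ℝ), b < 0 → ∫ x, lam x ∂μ - (logPartition m V lam b - b * R) ≤ K

section Confining

variable {E : Type*} [TopologicalSpace E] [MeasurableSpace E] {m μ : Measure E} {V : E → ℝ}
  {R K a b : ℝ}

namespace IsConfining

/-- The bounded continuous truncation `min V n` of a confining potential. -/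
def truncation (hV : IsConfining V m) (n : ℕ) : E →ᵇ ℝ :=
  .ofNormedAddCommGroup (fun x => min (V x) n) (hV.continuous.min continuous_const) n fun x => by
    rw [Real.norm_of_nonneg (le_min (hV.nonneg x) n.cast_nonneg)]
    exact min_le_right _ _

lemma truncation_apply (hV : IsConfining V m) (n : ℕ) (x : E) :
    hV.truncation n x = min (V x) n := rfl

lemma tendsto_truncation (hV : IsConfining V m) (x : E) :
    Tendsto (fun n => hV.truncation n x) atTop (𝓝 (V x)) :=
  tendsto_min_of_tendsto_atTop tendsto_natCast_atTop_atTop (V x)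

lemma truncation_nonneg (hV : IsConfining V m) (n : ℕ) (x : E) : 0 ≤ hV.truncation n x :=
  le_min (hV.nonneg x) n.cast_nonneg

lemma isProbabilityMeasure_tilted_mul [NeZero m] (hV : IsConfining V m) (ha : a < 0) :
    IsProbabilityMeasure (m.tilted fun x => a * V x) :=
  isProbabilityMeasure_tilted (hV.integrable_exp_mul ha)

variable [BorelSpace E]

lemma measurable (hV : IsConfining V m) : Measurable V := hV.continuous.measurable

lemma integrable_exp_mul_add (hV : IsConfining V m) (ha : a < 0) (lam : E →ᵇ ℝ) :
    Integrable (fun x => Real.exp (a * V x + lam x)) m := by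
  have hmeas : Measurable fun x => Real.exp (a * V x + lam x) :=
    ((hV.measurable.const_mul a).add lam.continuous.measurable).exp
  refine ((hV.integrable_exp_mul ha).mul_const (Real.exp ‖lam‖)).mono' hmeas.aestronglyMeasurable
    (ae_of_all _ fun x => ?_)
  rw [Real.norm_of_nonneg (Real.exp_pos _).le, ← Real.exp_add]
  gcongr
  exact (le_abs_self _).trans (lam.norm_coe_le_norm x)

lemma log_integral_exp_tilted_eq_logPartition_sub [NeZero m] (hV : IsConfining V m)
    (ha : a < 0) (lam : E →ᵇ ℝ) :
    Real.log (∫ x, Real.exp (lam x) ∂m.tilted fun x => a * V x)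
      = logPartition m V lam a - logPartition m V 0 a := by
  rw [log_integral_exp_tilted (hV.integrable_exp_mul ha) (hV.integrable_exp_mul_add ha lam)]
  simp only [logPartition, Pi.zero_apply, add_zero]

-- The derivative of the convex function `b ↦ log ∫ exp (b V + λ) dm - b R` vanishes at `b = a`.
lemma logPartition_sub_le_of_integral_eq [NeZero m] (hV : IsConfining V m) (hR : R ≠ 0)
    (ha : a < 0) (hb : b < 0) (lam : E →ᵇ ℝ)
    (h : ∫ x, V x * Real.exp (a * V x + lam x) ∂m = R * ∫ x, Real.exp (a * V x + lam x) ∂m) :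
    logPartition m V lam a - a * R ≤ logPartition m V lam b - b * R := by
  have hexp := hV.integrable_exp_mul_add ha lam
  set γ := m.tilted fun x => a * V x + lam x
  have : IsProbabilityMeasure γ := isProbabilityMeasure_tilted hexp
  have hmean : ∫ x, V x ∂γ = R := by
    simp only [γ, integral_tilted, smul_eq_mul, div_mul_eq_mul_div, integral_div,
      mul_comm (Real.exp _)]
    rw [h, mul_div_cancel_right₀ _ (integral_exp_pos hexp).ne']
  have hint : Integrable V γ := not_imp_comm.1 integral_undef (hmean ▸ hR)
  have hshift (x : E) : a * V x + lam x + (b - a) * V x = b * V x + lam x := by ring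
  have hexp' : Integrable (fun x => Real.exp (a * V x + lam x + (b - a) * V x)) m := by
    simpa only [hshift] using hV.integrable_exp_mul_add hb lam
  have hexpγ := integrable_exp_tilted hexp hexp'
  have hJensen : ∫ x, (b - a) * V x ∂γ ≤ Real.log (∫ x, Real.exp ((b - a) * V x) ∂γ) :=
    (Real.le_log_iff_exp_le (integral_exp_pos hexpγ)).2 <|
      convexOn_exp.map_integral_le continuousOn_exp isClosed_univ (ae_of_all _ fun _ => trivial)
        (hint.const_mul _) hexpγ
  rw [integral_const_mul, hmean, log_integral_exp_tilted hexp hexp'] at hJensen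
  simp only [hshift] at hJensen
  simp only [logPartition]
  linarith

theorem integral_sub_logPartition_le_rateFunction [NeZero m] (hV : IsConfining V m) (hR : 0 ≤ R)
    (ha : a < 0) (hb : b < 0) [IsProbabilityMeasure μ] (lam : E →ᵇ ℝ) :
    ((∫ x, lam x ∂μ - (logPartition m V lam b - b * R)
      + (logPartition m V 0 a - a * R) : ℝ) : EReal) ≤ rateFunction m V R a μ := by
  by_cases htop : rateFunction m V R a μ = ⊤
  · exact htop ▸ le_top
  obtain ⟨hμ, hkl⟩ := rateFunction_ne_top_iff.1 htop
  have hint := integrable_of_lintegral_ofReal_le hV.measurable hV.nonneg hμ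
  have hmean := integral_le_of_lintegral_ofReal_le hV.measurable hV.nonneg hR hμ
  have := hV.isProbabilityMeasure_tilted_mul ha
  have hshift (x : E) : a * V x + ((b - a) * V x + lam x) = b * V x + lam x := by ring
  have hexp : Integrable (fun x => Real.exp (a * V x + ((b - a) * V x + lam x))) m := by
    simpa only [hshift] using hV.integrable_exp_mul_add hb lam
  have hDV := integral_sub_log_integral_exp_le_toReal_klDiv hkl
    ((hint.const_mul (b - a)).add (lam.integrable μ))
    (integrable_exp_tilted (hV.integrable_exp_mul ha) hexp)
  simp only [Pi.add_apply] at hDV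
  rw [integral_add (hint.const_mul _) (lam.integrable μ), integral_const_mul,
    log_integral_exp_tilted (hV.integrable_exp_mul ha) hexp] at hDV
  simp only [hshift] at hDV
  rw [rateFunction_eq_coe hμ hkl, EReal.coe_le_coe_iff]
  simp only [logPartition, Pi.zero_apply, add_zero]
  linarith [mul_nonneg_of_nonpos_of_nonpos hb.le (sub_nonpos.2 hmean)]

lemma logPartition_neg_one_sub_smul_truncation_le [NeZero m] (hV : IsConfining V m) (k n : ℕ) :
    logPartition m V ((k : ℝ) • hV.truncation n) (-1 - k) ≤ logPartition m V 0 (-1) := by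
  have hk : (-1 - k : ℝ) < 0 := by linarith [k.cast_nonneg (α := ℝ)]
  have hint := hV.integrable_exp_mul_add hk ((k : ℝ) • hV.truncation n)
  refine Real.log_le_log (integral_exp_pos hint) (integral_mono hint
    (by simpa using hV.integrable_exp_mul neg_one_lt_zero) fun x => Real.exp_le_exp.2 ?_)
  simp only [Pi.smul_apply, smul_eq_mul, Pi.zero_apply, truncation_apply]
  linarith [mul_le_mul_of_nonneg_left (min_le_left (V x) n) k.cast_nonneg]

-- Test `λ = k min(V, n)` against `b = -1 - k` and let `k → ∞`.
lemma integral_truncation_le_of_isDualBound [NeZero m] (hV : IsConfining V m)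
    (h : IsDualBound m V R μ K) (n : ℕ) : ∫ x, hV.truncation n x ∂μ ≤ R := by
  have hbound (k : ℕ) :
      k * (∫ x, hV.truncation n x ∂μ - R) ≤ K + logPartition m V 0 (-1) + R := by
    have hk : ∫ x, k * hV.truncation n x ∂μ
        - (logPartition m V ((k : ℝ) • hV.truncation n) (-1 - k) - (-1 - k) * R) ≤ K :=
      h ((k : ℝ) • hV.truncation n) (-1 - k) (by linarith [k.cast_nonneg (α := ℝ)])
    have hlog := hV.logPartition_neg_one_sub_smul_truncation_le k n
    rw [integral_const_mul] at hk
    linarith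
  by_contra! hlt
  obtain ⟨k, hk⟩ := exists_nat_gt ((K + logPartition m V 0 (-1) + R)
    / (∫ x, hV.truncation n x ∂μ - R))
  exact (((div_lt_iff₀ (sub_pos.2 hlt)).1 hk).trans_le (hbound k)).false

lemma lintegral_ofReal_le_of_isDualBound [NeZero m] [IsFiniteMeasure μ] (hV : IsConfining V m)
    (h : IsDualBound m V R μ K) : ∫⁻ x, ENNReal.ofReal (V x) ∂μ ≤ ENNReal.ofReal R :=
  lintegral_ofReal_le_of_forall_integral_min_le hV.measurable hV.nonneg
    (hV.integral_truncation_le_of_isDualBound h)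

lemma tendsto_integral_truncation (hV : IsConfining V m) (hint : Integrable V μ) :
    Tendsto (fun n => ∫ x, hV.truncation n x ∂μ) atTop (𝓝 (∫ x, V x ∂μ)) := by
  refine tendsto_integral_of_dominated_convergence V
    (fun n => (hV.truncation n).continuous.measurable.aestronglyMeasurable) hint
    (fun n => ae_of_all _ fun x => ?_) (ae_of_all _ hV.tendsto_truncation)
  rw [Real.norm_of_nonneg (hV.truncation_nonneg n x)]
  exact min_le_left _ _

lemma tendsto_logPartition_add_smul_truncation [NeZero m] (hV : IsConfining V m) (hab : a ≤ b)
    (hb : b < 0) (lam : E →ᵇ ℝ) :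
    Tendsto (fun n => logPartition m V (lam + (a - b) • hV.truncation n) b) atTop
      (𝓝 (logPartition m V lam a)) := by
  have hexp := hV.integrable_exp_mul_add (hab.trans_lt hb) lam
  refine Tendsto.log ?_ (integral_exp_pos hexp).ne'
  refine tendsto_integral_of_dominated_convergence _
    (fun n => (hV.integrable_exp_mul_add hb (lam + (a - b) • hV.truncation n)).aestronglyMeasurable)
    (hV.integrable_exp_mul_add hb lam) (fun n => ae_of_all _ fun x => ?_)
    (ae_of_all _ fun x => (Real.continuous_exp.tendsto _).comp ?_)
  · rw [Real.norm_of_nonneg (Real.exp_pos _).le]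
    refine Real.exp_le_exp.2 (add_le_add_right (add_le_of_nonpos_right ?_) _)
    exact mul_nonpos_of_nonpos_of_nonneg (sub_nonpos.2 hab) (hV.truncation_nonneg n x)
  · have hlim := (((hV.tendsto_truncation x).const_mul (a - b)).const_add (lam x)).const_add
      (b * V x)
    rwa [show b * V x + (lam x + (a - b) * V x) = a * V x + lam x by ring] at hlim

-- Test `λ + (a - b) min(V, n)` at the parameter `b` and let first `n → ∞`, then `b → 0⁻`.
lemma integral_add_sub_logPartition_le_of_isDualBound [NeZero m] [IsFiniteMeasure μ]
    (hV : IsConfining V m) (h : IsDualBound m V R μ K) (hint : Integrable V μ) (ha : a < 0)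
    (lam : E →ᵇ ℝ) : ∫ x, lam x ∂μ + a * ∫ x, V x ∂μ - logPartition m V lam a ≤ K := by
  have hbound (b : ℝ) (hab : a ≤ b) (hb : b < 0) :
      ∫ x, lam x ∂μ + (a - b) * ∫ x, V x ∂μ - (logPartition m V lam a - b * R) ≤ K := by
    refine le_of_tendsto' ((((hV.tendsto_integral_truncation hint).const_mul (a - b)).const_add
      (∫ x, lam x ∂μ)).sub ((hV.tendsto_logPartition_add_smul_truncation hab hb lam).sub_const
        (b * R))) fun n => ?_
    have hn : ∫ x, (lam x + (a - b) * hV.truncation n x) ∂μ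
        - (logPartition m V (lam + (a - b) • hV.truncation n) b - b * R) ≤ K :=
      h (lam + (a - b) • hV.truncation n) b hb
    rwa [integral_add (lam.integrable μ) (((hV.truncation n).integrable μ).const_mul _),
      integral_const_mul] at hn
  have hlim : Tendsto (fun b : ℝ =>
      ∫ x, lam x ∂μ + (a - b) * ∫ x, V x ∂μ - (logPartition m V lam a - b * R)) (𝓝[<] 0)
      (𝓝 (∫ x, lam x ∂μ + (a - 0) * ∫ x, V x ∂μ - (logPartition m V lam a - 0 * R))) :=
    (Continuous.tendsto (by fun_prop) 0).mono_left nhdsWithin_le_nhds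
  have hle := le_of_tendsto hlim <| by
    filter_upwards [Ioo_mem_nhdsLT ha] with b hb using hbound b hb.1.le hb.2
  simpa only [sub_zero, zero_mul] using hle

lemma isFenchelBound_of_isDualBound [TopologicalSpace.PseudoMetrizableSpace E] [NeZero m]
    [IsFiniteMeasure μ] (hV : IsConfining V m) (h : IsDualBound m V R μ K) (hint : Integrable V μ)
    (ha : a < 0) :
    IsFenchelBound μ (m.tilted fun x => a * V x) (K + logPartition m V 0 a - a * ∫ x, V x ∂μ) := by
  have := hV.isProbabilityMeasure_tilted_mul ha
  refine isFenchelBound_of_forall_boundedContinuous fun g => ?_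
  have hexp : Integrable (fun x => Real.exp (g x)) (m.tilted fun x => a * V x) :=
    integrable_exp_tilted (hV.integrable_exp_mul ha) (hV.integrable_exp_mul_add ha g)
  have hlog := Real.log_le_sub_one_of_pos (integral_exp_pos hexp)
  rw [hV.log_integral_exp_tilted_eq_logPartition_sub ha] at hlog
  rw [integral_sub hexp (integrable_const 1), integral_const, probReal_univ, one_smul]
  linarith [hV.integral_add_sub_logPartition_le_of_isDualBound h hint ha g]

theorem rateFunction_le_of_isDualBound [TopologicalSpace.PseudoMetrizableSpace E] [NeZero m]
    [IsFiniteMeasure μ] (hV : IsConfining V m) (h : IsDualBound m V R μ K) (ha : a < 0) :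
    rateFunction m V R a μ ≤ ((K + logPartition m V 0 a - a * R : ℝ) : EReal) := by
  have := hV.isProbabilityMeasure_tilted_mul ha
  have hμ := hV.lintegral_ofReal_le_of_isDualBound h
  have hfenchel := hV.isFenchelBound_of_isDualBound h
    (integrable_of_lintegral_ofReal_le hV.measurable hV.nonneg hμ) ha
  rw [rateFunction_eq_coe hμ (ne_top_of_le_ne_top ENNReal.ofReal_ne_top hfenchel.klDiv_le),
    EReal.coe_le_coe_iff]
  linarith [ENNReal.toReal_le_of_le_ofReal hfenchel.nonneg hfenchel.klDiv_le]

end IsConfining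

end Confining

section Legendre

variable {E : Type*} [TopologicalSpace E] [TopologicalSpace.PseudoMetrizableSpace E]
  [MeasurableSpace E] [BorelSpace E] {m μ : Measure E} [NeZero m] {V : E → ℝ} {R : ℝ}

lemma iSup_integral_sub_eq_rateFunction [IsProbabilityMeasure μ] (hV : IsConfining V m)
    (hR : 0 < R) {α : (E →ᵇ ℝ) → ℝ} (hα₀ : ∀ lam, α lam < 0)
    (hα : ∀ lam, ∫ x, V x * Real.exp (α lam * V x + lam x) ∂m
      = R * ∫ x, Real.exp (α lam * V x + lam x) ∂m) :
    (⨆ lam : E →ᵇ ℝ, ((∫ x, lam x ∂μ - (logPartition m V lam (α lam) - α lam * R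
      - logPartition m V 0 (α 0) + α 0 * R) : ℝ) : EReal)) = rateFunction m V R (α 0) μ := by
  refine le_antisymm (iSup_le fun lam => ?_) (EReal.le_of_forall_lt_iff_le.1 fun K hK => ?_)
  · convert hV.integral_sub_logPartition_le_rateFunction (μ := μ) hR.le (hα₀ 0) (hα₀ lam) lam
      using 2
    ring
  · have hdual : IsDualBound m V R μ (K - logPartition m V 0 (α 0) + α 0 * R) := by
      intro lam b hb
      have hlam := EReal.coe_le_coe_iff.1 ((le_iSup _ lam).trans hK.le)
      linarith [hV.logPartition_sub_le_of_integral_eq hR.ne' (hα₀ lam) hb lam (hα lam)]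
    convert hV.rateFunction_le_of_isDualBound hdual (hα₀ 0) using 2
    ring

theorem stmt4_general (hV : IsConfining V m) (hR : 0 < R) (α : (E →ᵇ ℝ) → ℝ)
    (hα : ∀ lam, α lam < 0 ∧ ∫ x, V x * Real.exp (α lam * V x + lam x) ∂m
      = R * ∫ x, Real.exp (α lam * V x + lam x) ∂m) :
    (∀ μ : Measure E, IsProbabilityMeasure μ →
      (⨆ lam : E →ᵇ ℝ, ((∫ x, lam x ∂μ - (logPartition m V lam (α lam) - α lam * R
        - logPartition m V 0 (α 0) + α 0 * R) : ℝ) : EReal)) = rateFunction m V R (α 0) μ) ∧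
    (∀ μ ν : Measure E, IsProbabilityMeasure μ → IsProbabilityMeasure ν → μ ≠ ν →
      rateFunction m V R (α 0) μ ≠ ⊤ → rateFunction m V R (α 0) ν ≠ ⊤ →
      ∀ t : ℝ, t ∈ Set.Ioo (0 : ℝ) 1 →
        rateFunction m V R (α 0) (ENNReal.ofReal t • μ + ENNReal.ofReal (1 - t) • ν)
          < ((t * (rateFunction m V R (α 0) μ).toReal
            + (1 - t) * (rateFunction m V R (α 0) ν).toReal : ℝ) : EReal)) :=
  ⟨fun _ _ => iSup_integral_sub_eq_rateFunction hV hR (fun lam => (hα lam).1)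
      fun lam => (hα lam).2,
    fun _ _ _ _ hne hμ hν _ ht =>
      rateFunction_convexCombination_lt hV.measurable hV.nonneg hne hμ hν ht⟩

end Legendre

section Orlicz

variable {V : ℝ → ℝ} {R a : ℝ} {μ ν : Measure ℝ}

lemma integrable_exp_neg_mul_abs {b : ℝ} (hb : 0 < b) :
    Integrable fun x : ℝ => Real.exp (-b * |x|) := by
  have hIoi : Integrable (Set.indicator (Set.Ioi 0) fun x : ℝ => Real.exp (-b * x)) :=
    (exp_neg_integrableOn_Ioi 0 hb).integrable_indicator measurableSet_Ioi
  refine (hIoi.add hIoi.comp_neg).congr ?_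
  filter_upwards [compl_mem_ae_iff.2 (measure_singleton (0 : ℝ))] with x hx
  rcases lt_or_gt_of_ne (show x ≠ 0 from hx) with hneg | hpos
  · simp [hneg, hneg.le, abs_of_neg hneg]
  · simp [hpos, hpos.le, abs_of_pos hpos]

lemma IsOrlicz.linear_le (hV : IsOrlicz V) (x : ℝ) : V 1 * (|x| - 1) ≤ V x := by
  obtain ⟨hconv, hsymm, hzero, _, hnonneg⟩ := hV
  have habs : V |x| = V x := by
    rcases abs_choice x with h | h
    · rw [h]
    · rw [h, hsymm]
  rcases le_total |x| 1 with hx | hx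
  · exact (mul_nonpos_of_nonneg_of_nonpos (hnonneg 1) (sub_nonpos.2 hx)).trans (hnonneg x)
  · have hx₀ : 0 < |x| := zero_lt_one.trans_le hx
    have hchord := hconv.2 (Set.mem_univ |x|) (Set.mem_univ 0) (inv_nonneg.2 hx₀.le)
      (sub_nonneg.2 (inv_le_one_of_one_le₀ hx)) (add_sub_cancel _ _)
    simp only [smul_eq_mul, mul_zero, add_zero, hzero, inv_mul_cancel₀ hx₀.ne', habs] at hchord
    rw [inv_mul_eq_div, le_div_iff₀ hx₀] at hchord
    linarith [hnonneg 1]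

lemma IsOrlicz.isConfining (hV : IsOrlicz V) : IsConfining V volume := by
  have hcont : Continuous V := continuousOn_univ.1 (hV.1.continuousOn isOpen_univ)
  refine ⟨hcont, hV.2.2.2.2, fun {a} ha => ?_⟩
  have hV₁ : 0 < V 1 := hV.2.2.2.1 1 one_ne_zero
  refine ((integrable_exp_neg_mul_abs (mul_pos (neg_pos.2 ha) hV₁)).const_mul
    (Real.exp (-a * V 1))).mono' (by fun_prop) (ae_of_all _ fun x => ?_)
  rw [Real.norm_of_nonneg (Real.exp_pos _).le, ← Real.exp_add, Real.exp_le_exp]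
  linarith [mul_le_mul_of_nonpos_left (hV.linear_le x) ha.le]

lemma relEnt_eq_klDiv [IsProbabilityMeasure μ] [IsProbabilityMeasure ν] :
    relEnt μ ν = (klDiv μ ν : EReal) := by
  by_cases h : klDiv μ ν = ⊤
  · have hnot : ¬(μ ≪ ν ∧ Integrable (llr μ ν) μ) := fun h' => klDiv_ne_top_iff.2 h' h
    rw [h, EReal.coe_ennreal_top]
    exact if_neg hnot
  · have hac := klDiv_ne_top_iff.1 h
    rw [← EReal.coe_ennreal_toReal h,
      toReal_klDiv_of_measure_eq hac.1 (by simp only [measure_univ])]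
    exact if_pos hac

lemma rateI_eq_rateFunction [IsProbabilityMeasure μ] (hV : IsConfining V volume) (ha : a < 0) :
    rateI V R a μ = rateFunction volume V R a μ := by
  have hgibbs : gibbs V a = volume.tilted fun x => a * V x := rfl
  have := hV.isProbabilityMeasure_tilted_mul ha
  rw [rateI, rateFunction, hgibbs, relEnt_eq_klDiv,
    integral_eq_lintegral_of_nonneg_ae (ae_of_all _ hV.nonneg) hV.measurable.aestronglyMeasurable]
  rfl

lemma iSup_Cb_eq_iSup_boundedContinuous {β : Type*} [SupSet β] (F : (ℝ → ℝ) → β) :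
    ⨆ lam : Cb, F lam.1 = ⨆ lam : ℝ →ᵇ ℝ, F lam :=
  (Function.Surjective.iSup_congr
    (fun lam : ℝ →ᵇ ℝ => (⟨lam, lam.continuous, ‖lam‖, lam.norm_coe_le_norm⟩ : Cb))
    (fun ⟨lam, hlam, C, hC⟩ => ⟨.ofNormedAddCommGroup lam hlam C hC, rfl⟩) fun _ => rfl).symm

end Orlicz

/-- The Legendre transform over `C_b(ℝ)` of the Gärtner–Ellis limit `Λ_V` equals the rate
function `I_V`, which is moreover strictly convex where finite. -/
theorem stmt4 (V : ℝ → ℝ) (hV : IsOrlicz V) (R : ℝ) (hR : 0 < R)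
    (alph : (ℝ → ℝ) → ℝ)
    (halph : ∀ lam : ℝ → ℝ, Continuous lam → (∃ C : ℝ, ∀ x, |lam x| ≤ C) →
      alph lam < 0 ∧
        (∫ x : ℝ, V x * Real.exp (alph lam * V x + lam x))
          = R * ∫ x : ℝ, Real.exp (alph lam * V x + lam x)) :
    (∀ μ : Measure ℝ, IsProbabilityMeasure μ →
      (⨆ lam : Cb, (((∫ x, lam.1 x ∂μ) -
          (phiV V lam.1 (alph lam.1) - alph lam.1 * R
            - phiV V (fun _ => 0) (alph fun _ => 0) + (alph fun _ => 0) * R) : ℝ) : EReal))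
        = rateI V R (alph fun _ => 0) μ) ∧
    -- strict convexity of `I_V` where finite
    (∀ μ ν : Measure ℝ, IsProbabilityMeasure μ → IsProbabilityMeasure ν → μ ≠ ν →
      rateI V R (alph fun _ => 0) μ ≠ ⊤ → rateI V R (alph fun _ => 0) ν ≠ ⊤ →
      ∀ t : ℝ, t ∈ Set.Ioo (0 : ℝ) 1 →
        rateI V R (alph fun _ => 0) (ENNReal.ofReal t • μ + ENNReal.ofReal (1 - t) • ν)
          < ((t * (rateI V R (alph fun _ => 0) μ).toReal
              + (1 - t) * (rateI V R (alph fun _ => 0) ν).toReal : ℝ) : EReal)) := by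
  obtain ⟨hLegendre, hconvex⟩ := stmt4_general hV.isConfining hR (fun lam => alph lam) fun lam =>
    halph lam lam.continuous ⟨‖lam‖, lam.norm_coe_le_norm⟩
  have ha : alph (fun _ => 0) < 0 := (halph _ continuous_const ⟨0, by simp⟩).1
  refine ⟨fun μ _ => ?_, fun μ ν _ _ hne hμ hν t ht => ?_⟩
  · rw [rateI_eq_rateFunction hV.isConfining ha]
    refine (iSup_Cb_eq_iSup_boundedContinuous fun lam => ((∫ x, lam x ∂μ
      - (phiV V lam (alph lam) - alph lam * R - phiV V (fun _ => 0) (alph fun _ => 0)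
        + (alph fun _ => 0) * R) : ℝ) : EReal)).trans ?_
    exact hLegendre μ inferInstance
  · have := isProbabilityMeasure_convexCombination (μ := μ) (ν := ν) (Set.Ioo_subset_Icc_self ht)
    simp only [rateI_eq_rateFunction hV.isConfining ha] at hμ hν ⊢
    exact hconvex μ ν inferInstance inferInstance hne hμ hν t ht
end
end

section
/- Let V: ℝ → [0,∞) be an Orlicz function and R ∈ (0,∞). Then lim_{n→∞} (1/n) log vol_n(B_R^{n,V}) = inf_{α < 0} [ log ∫_ℝ e^{αV(t)} dt − αR ], and this infimum equals φ_V(ᾱ,0) − ᾱR, where ᾱ ∈ (-∞,0) is the unique solution of ∫_ℝ V(x) e^{ᾱV(x)} dx = R ∫_ℝ e^{ᾱV(x)} dx. -/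
open MeasureTheory Real Filter Topology ENNReal

noncomputable section

/-- `φ_V(α,0) = log ∫ e^{α V(x)} dx`. -/
def phiV0 (V : ℝ → ℝ) (α : ℝ) : ℝ := Real.log (∫ x : ℝ, Real.exp (α * V x))

/-- The Orlicz ball `B_R^{n,V} = {x ∈ ℝⁿ : ∑ V(x_k) ≤ R n}`. -/
def OrliczBall (V : ℝ → ℝ) (R : ℝ) (n : ℕ) : Set (Fin n → ℝ) :=
  {x | ∑ i, V (x i) ≤ R * n}

/-!
The theorem is Cramér's theorem for the infinite measure `dx`: `φ_V(·, 0)` is the cumulant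
generating function `cgf V` of `V` with respect to Lebesgue measure, and the Orlicz ball is a
sublevel set of the sum of `n` independent copies of `V`. The Chernoff bound gives
`vol_n(B_R) ≤ exp (n (cgf V α - α R))` for every `α < 0`. Conversely, tilting Lebesgue measure by
`exp (α V)` produces a probability measure under which `V` has mean `(cgf V)' α`. If this mean is
less than `R`, the weak law of large numbers puts almost all the tilted mass into the ball, and on
the set where it lives the density is about `exp (n (α (cgf V)' α - cgf V α))`. Since `(cgf V)'` is
strictly increasing at `ᾱ`, where it equals `R`, letting `α` increase to `ᾱ` makes the two bounds
meet. The same `ᾱ` is the minimizer because `cgf V` lies above its tangent line.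
-/

theorem tendsto_one_div_mul_log_of_exp_bounds {u : ℕ → ℝ} {l : ℝ}
    (hupper : ∀ᶠ n : ℕ in atTop, u n ≤ exp (n * l))
    (hlower : ∀ a < l, ∀ᶠ n : ℕ in atTop, exp (n * a) ≤ u n) :
    Tendsto (fun n : ℕ => 1 / (n : ℝ) * log (u n)) atTop (𝓝 l) := by
  refine tendsto_order.2 ⟨fun a ha => ?_, fun b hb => ?_⟩
  · obtain ⟨c, hac, hcl⟩ := exists_between ha
    filter_upwards [hlower c hcl, eventually_gt_atTop 0] with n hn hn0
    have hn0 : (0 : ℝ) < n := Nat.cast_pos.2 hn0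
    rw [one_div, lt_inv_mul_iff₀ hn0]
    exact (mul_lt_mul_of_pos_left hac hn0).trans_le
      ((le_log_iff_exp_le ((exp_pos _).trans_le hn)).2 hn)
  · filter_upwards [hupper, hlower (l - 1) (sub_one_lt l), eventually_gt_atTop 0] with n hn hn' hn0
    have hn0 : (0 : ℝ) < n := Nat.cast_pos.2 hn0
    rw [one_div, inv_mul_lt_iff₀ hn0]
    exact ((log_le_iff_le_exp ((exp_pos _).trans_le hn')).2 hn).trans_lt
      (mul_lt_mul_of_pos_left hb hn0)

section Product

open ProbabilityTheory

variable {ι : Type*} [Fintype ι] {Ω : ι → Type*} [∀ i, MeasurableSpace (Ω i)]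
  {μ : ∀ i, Measure (Ω i)} [∀ i, SigmaFinite (μ i)]

theorem pi_tilted (f : ∀ i, Ω i → ℝ) :
    Measure.pi (fun i => (μ i).tilted (f i)) =
      (Measure.pi μ).tilted fun x => ∑ i, f i (x i) := by
  refine Measure.pi_eq fun s hs => ?_
  simp_rw [tilted_apply_eq_ofReal_integral' _ (MeasurableSet.univ_pi hs), exp_sum,
    integral_fintype_prod_eq_prod (fun i y => exp (f i y)), ← Finset.prod_div_distrib,
    Measure.restrict_pi_pi]
  rw [integral_fintype_prod_eq_prod (fun i y => exp (f i y) / ∫ z, exp (f i z) ∂μ i),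
    ENNReal.ofReal_prod_of_nonneg fun i _ => integral_nonneg fun y => by positivity]
  simp_rw [tilted_apply_eq_ofReal_integral' _ (hs _)]

theorem mgf_sum_pi (X : ∀ i, Ω i → ℝ) (t : ℝ) :
    mgf (fun x => ∑ i, X i (x i)) (Measure.pi μ) t = ∏ i, mgf (X i) (μ i) t := by
  simp_rw [mgf, Finset.mul_sum, exp_sum]
  exact integral_fintype_prod_eq_prod fun i y => exp (t * X i y)

theorem integrable_exp_mul_sum_pi {X : ∀ i, Ω i → ℝ} {t : ℝ}
    (h_int : ∀ i, Integrable (fun y => exp (t * X i y)) (μ i)) :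
    Integrable (fun x => exp (t * ∑ i, X i (x i))) (Measure.pi μ) := by
  simp_rw [Finset.mul_sum, exp_sum]
  exact Integrable.fintype_prod_dep h_int

end Product

section Cramer

open ProbabilityTheory

variable {Ω : Type*} [MeasurableSpace Ω] {μ : Measure Ω} {X : Ω → ℝ} {s t r a : ℝ}

theorem measure_le_le_ofReal_exp_mul_mgf (r : ℝ) (ht : t ≤ 0)
    (h_int : Integrable (fun ω => exp (t * X ω)) μ) :
    μ {ω | X ω ≤ r} ≤ ENNReal.ofReal (exp (-t * r) * mgf X μ t) := by
  have markov := mul_meas_ge_le_lintegral₀ h_int.aemeasurable.ennreal_ofReal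
    (ENNReal.ofReal (exp (t * r)))
  rw [← ofReal_integral_eq_lintegral_ofReal h_int (ae_of_all _ fun _ => (exp_pos _).le),
    ENNReal.mul_le_iff_le_inv (by simp [exp_pos]) ofReal_ne_top,
    ← ENNReal.ofReal_inv_of_pos (exp_pos _), ← exp_neg, ← neg_mul,
    ← ENNReal.ofReal_mul (exp_pos _).le] at markov
  refine (measure_mono fun ω (hω : X ω ≤ r) => ?_).trans markov
  exact ENNReal.ofReal_le_ofReal (exp_le_exp.2 (mul_le_mul_of_nonpos_left hω ht))

theorem measure_pi_sum_le_le [SigmaFinite μ] [NeZero μ] (r : ℝ) (ht : t ≤ 0)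
    (h_int : Integrable (fun ω => exp (t * X ω)) μ) (n : ℕ) :
    Measure.pi (fun _ : Fin n => μ) {x | ∑ i, X (x i) ≤ r * n} ≤
      ENNReal.ofReal (exp (n * (cgf X μ t - t * r))) := by
  refine (measure_le_le_ofReal_exp_mul_mgf _ ht
    (integrable_exp_mul_sum_pi fun _ => h_int)).trans_eq ?_
  rw [mgf_sum_pi, Finset.prod_const, Finset.card_univ, Fintype.card_fin, ← exp_cgf h_int,
    ← exp_nat_mul, ← exp_add]
  ring_nf

theorem tilted_mul_le [SFinite μ] (h_int : Integrable (fun ω => exp (t * X ω)) μ) {A : Set Ω}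
    (hA : ∀ ω ∈ A, t * X ω - cgf X μ t ≤ a) :
    μ.tilted (t * X ·) A ≤ ENNReal.ofReal (exp a) * μ A := by
  rw [tilted_mul_apply_cgf A h_int, ← setLIntegral_const]
  refine setLIntegral_mono measurable_const fun ω hω => ?_
  gcongr
  exact hA ω hω

theorem measure_pi_le_abs_sum_sub_le [IsProbabilityMeasure μ] {ι : Type*} [Fintype ι]
    (hX : MemLp X 2 μ) (ha : 0 < a) :
    Measure.pi (fun _ : ι => μ) {x | a ≤ |∑ i, X (x i) - Fintype.card ι * μ[X]|} ≤
      ENNReal.ofReal (Fintype.card ι * Var[X; μ] / a ^ 2) := by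
  have hX_eval (i : ι) : MemLp (fun x : ι → Ω => X (x i)) 2 (Measure.pi fun _ => μ) :=
    hX.comp_measurePreserving (measurePreserving_eval (fun _ => μ) i)
  have hmean : ∫ x, (∑ i, fun x : ι → Ω => X (x i)) x ∂(Measure.pi fun _ => μ) =
      Fintype.card ι * μ[X] := by
    simp_rw [Finset.sum_apply]
    rw [integral_finsetSum _ fun i _ => (hX_eval i).integrable one_le_two]
    simp_rw [integral_comp_eval (μ := fun _ : ι => μ) hX.aestronglyMeasurable]
    simp
  have chebyshev := meas_ge_le_variance_div_sq
    (memLp_finsetSum' Finset.univ fun i _ => hX_eval i) ha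
  rw [variance_sum_pi (X := fun _ => X) fun _ => hX, hmean] at chebyshev
  simpa using chebyshev

theorem tendsto_measure_pi_abs_sum_sub_lt [IsProbabilityMeasure μ] (hX : MemLp X 2 μ)
    (ha : 0 < a) :
    Tendsto (fun n : ℕ => Measure.pi (fun _ : Fin n => μ) {x | |∑ i, X (x i) - n * μ[X]| < n * a})
      atTop (𝓝 1) := by
  have hbound : Tendsto (fun n : ℕ => 1 - ENNReal.ofReal (Var[X; μ] / a ^ 2 / n)) atTop (𝓝 1) := by
    have h0 := ENNReal.tendsto_ofReal (tendsto_const_div_atTop_nhds_zero_nat (Var[X; μ] / a ^ 2))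
    simpa using ENNReal.Tendsto.sub tendsto_const_nhds h0 (.inl one_ne_top)
  refine tendsto_of_tendsto_of_tendsto_of_le_of_le' hbound tendsto_const_nhds ?_
    (.of_forall fun n => prob_le_one)
  filter_upwards [eventually_gt_atTop 0] with n hn
  have hn : (0 : ℝ) < n := Nat.cast_pos.2 hn
  have htail := measure_pi_le_abs_sum_sub_le (ι := Fin n) hX (mul_pos hn ha)
  rw [Fintype.card_fin, show n * Var[X; μ] / (n * a) ^ 2 = Var[X; μ] / a ^ 2 / n by field_simp]
    at htail
  have huniv := measure_univ_le_add_compl (μ := Measure.pi fun _ : Fin n => μ)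
    {x | |∑ i, X (x i) - n * μ[X]| < n * a}
  rw [measure_univ] at huniv
  refine tsub_le_iff_right.2 (huniv.trans ?_)
  gcongr
  simpa only [Set.compl_ofPred, not_lt] using htail

theorem pi_tilted_mul_le [SigmaFinite μ] {n : ℕ} {A : Set (Fin n → Ω)}
    (h_int : Integrable (fun ω => exp (t * X ω)) μ) (hA : ∀ x ∈ A, t * ∑ i, X (x i) ≤ n * a) :
    Measure.pi (fun _ => μ.tilted (t * X ·)) A ≤
      ENNReal.ofReal (exp (n * (a - cgf X μ t))) * Measure.pi (fun _ => μ) A := by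
  have hcgf : cgf (fun x : Fin n → Ω => ∑ i, X (x i)) (Measure.pi fun _ => μ) t =
      n * cgf X μ t := by
    rw [cgf, mgf_sum_pi, Finset.prod_const, Finset.card_univ, Fintype.card_fin, Real.log_pow,
      cgf]
  rw [pi_tilted fun _ ω => t * X ω]
  simp_rw [← Finset.mul_sum]
  refine tilted_mul_le (integrable_exp_mul_sum_pi fun _ => h_int) fun x hx => ?_
  rw [hcgf, mul_sub]
  exact sub_le_sub_right (hA x hx) _

theorem eventually_ofReal_exp_le_measure_pi_abs_sum_sub_lt [SigmaFinite μ] [NeZero μ] {ε : ℝ}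
    (ht : t ∈ interior (integrableExpSet X μ)) (hε : 0 < ε)
    (ha : a < cgf X μ t - (t * deriv (cgf X μ) t + |t| * ε)) :
    ∀ᶠ n : ℕ in atTop, ENNReal.ofReal (exp (n * a)) ≤
      Measure.pi (fun _ : Fin n => μ) {x | |∑ i, X (x i) - n * deriv (cgf X μ) t| < n * ε} := by
  have h_int := integrable_of_mem_integrableExpSet (interior_subset ht)
  have := isProbabilityMeasure_tilted h_int
  have hmass := tendsto_measure_pi_abs_sum_sub_lt (memLp_tilted_mul ht 2) hε
  simp only [integral_tilted_mul_self ht] at hmass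
  set b := t * deriv (cgf X μ) t + |t| * ε
  have hdecay : Tendsto (fun n : ℕ => ENNReal.ofReal (exp (n * (b - cgf X μ t + a)))) atTop
      (𝓝 0) := by
    have hexp := tendsto_exp_atBot.comp
      (tendsto_natCast_atTop_atTop.atTop_mul_const_of_neg (show b - cgf X μ t + a < 0 by linarith))
    simpa using ENNReal.tendsto_ofReal hexp
  filter_upwards [hdecay.eventually_lt hmass zero_lt_one] with n hn
  have hexponent : ∀ x ∈ {x : Fin n → Ω | |∑ i, X (x i) - n * deriv (cgf X μ) t| < n * ε},
      t * ∑ i, X (x i) ≤ n * b := fun x hx => by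
    have hdev := (le_abs_self _).trans
      ((abs_mul t _).trans_le (mul_le_mul_of_nonneg_left (le_of_lt hx) (abs_nonneg t)))
    linear_combination hdev
  have htilt := hn.le.trans (pi_tilted_mul_le h_int hexponent)
  rw [mul_add, exp_add, ENNReal.ofReal_mul (exp_pos _).le] at htilt
  exact (ENNReal.mul_le_mul_iff_right (ENNReal.ofReal_pos.2 (exp_pos _)).ne' ofReal_ne_top).1 htilt

theorem eventually_ofReal_exp_le_measure_pi_sum_le [SigmaFinite μ] [NeZero μ]
    (ht : t ∈ interior (integrableExpSet X μ)) (hr : deriv (cgf X μ) t < r)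
    (ha : a < cgf X μ t - t * deriv (cgf X μ) t) :
    ∀ᶠ n : ℕ in atTop, ENNReal.ofReal (exp (n * a)) ≤
      Measure.pi (fun _ : Fin n => μ) {x | ∑ i, X (x i) ≤ r * n} := by
  set m := deriv (cgf X μ) t
  have hr' : ∀ᶠ ε in 𝓝 0, m + ε < r :=
    (Continuous.tendsto' (by fun_prop) 0 m (add_zero m)).eventually_lt_const hr
  have ha' : ∀ᶠ ε in 𝓝 0, a < cgf X μ t - (t * m + |t| * ε) :=
    (Continuous.tendsto' (by fun_prop) 0 (cgf X μ t - t * m) (by simp)).eventually_const_lt ha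
  obtain ⟨ε, ⟨hεr, hεa⟩, hε⟩ :=
    (((hr'.and ha').filter_mono nhdsWithin_le_nhds).and
      (self_mem_nhdsWithin (s := Set.Ioi 0))).exists
  filter_upwards [eventually_ofReal_exp_le_measure_pi_abs_sum_sub_lt ht hε hεa] with n hn
  refine hn.trans (measure_mono fun x hx => ?_)
  simp only [Set.mem_ofPred_eq] at hx ⊢
  have hle := mul_le_mul_of_nonneg_left hεr.le n.cast_nonneg
  linarith [lt_of_abs_lt hx]

theorem iteratedDeriv_two_cgf_pos (ht : t ∈ interior (integrableExpSet X μ))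
    (hX : ¬ X =ᵐ[μ] fun _ => deriv (cgf X μ) t) : 0 < iteratedDeriv 2 (cgf X μ) t := by
  have h_int := integrable_of_mem_integrableExpSet (interior_subset ht)
  rw [← variance_tilted_mul ht]
  refine (variance_nonneg _ _).lt_of_ne' fun hvar => hX ?_
  rw [← integral_tilted_mul_self ht]
  exact (absolutelyContinuous_tilted h_int).ae_le
    (ae_eq_integral_of_variance_eq_zero (memLp_tilted_mul ht 2) hvar)

theorem eventually_deriv_cgf_lt (ht : t ∈ interior (integrableExpSet X μ))
    (hX : ¬ X =ᵐ[μ] fun _ => deriv (cgf X μ) t) :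
    ∀ᶠ s in 𝓝[<] t, deriv (cgf X μ) s < deriv (cgf X μ) t := by
  have hpos := iteratedDeriv_two_cgf_pos ht hX
  rw [iteratedDeriv_succ, iteratedDeriv_one] at hpos
  have hsign := eventually_nhdsWithin_sign_eq_of_deriv_pos
    (f := fun s => deriv (cgf X μ) s - deriv (cgf X μ) t) (by simpa using hpos) (sub_self _)
  filter_upwards [nhdsWithin_le_nhds hsign, self_mem_nhdsWithin] with s hs (hst : s < t)
  rw [sign_neg (sub_neg.2 hst), sign_eq_neg_one_iff, sub_neg] at hs
  exact hs

theorem cgf_add_mul_deriv_le (ht : t ∈ interior (integrableExpSet X μ))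
    (hs : s ∈ integrableExpSet X μ) :
    cgf X μ t + (s - t) * deriv (cgf X μ) t ≤ cgf X μ s := by
  rcases eq_zero_or_neZero μ with rfl | _
  · simp
  have h_int := integrable_of_mem_integrableExpSet (interior_subset ht)
  have := isProbabilityMeasure_tilted h_int
  have hadd (ω : Ω) : t * X ω + (s - t) * X ω = s * X ω := by ring
  have jensen := convexOn_exp.map_integral_le (μ := μ.tilted (t * X ·))
    (f := fun ω => (s - t) * X ω) continuous_exp.continuousOn isClosed_univ (by simp)
    (((memLp_tilted_mul ht 1).integrable le_rfl).const_mul _)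
    ((integrable_tilted_iff h_int _).2
      (by simpa only [smul_eq_mul, Function.comp_apply, ← exp_add, hadd] using! hs))
  rw [integral_const_mul, integral_tilted_mul_self ht, integral_exp_tilted] at jensen
  simp only [Pi.add_apply, hadd] at jensen
  change _ ≤ mgf X μ s / mgf X μ t at jensen
  rwa [← exp_cgf hs, ← exp_cgf h_int, ← exp_sub, exp_le_exp, le_sub_iff_add_le'] at jensen

theorem tendsto_log_measure_pi_sum_le [SigmaFinite μ] (ht : t ∈ interior (integrableExpSet X μ))
    (ht0 : t ≤ 0) (hX : ¬ X =ᵐ[μ] fun _ => deriv (cgf X μ) t) :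
    Tendsto (fun n : ℕ => 1 / (n : ℝ) *
        log (Measure.pi (fun _ : Fin n => μ) {x | ∑ i, X (x i) ≤ deriv (cgf X μ) t * n}).toReal)
      atTop (𝓝 (cgf X μ t - t * deriv (cgf X μ) t)) := by
  have : NeZero μ := ⟨by rintro rfl; simp [EventuallyEq] at hX⟩
  have hupper := measure_pi_sum_le_le (deriv (cgf X μ) t) ht0
    (integrable_of_mem_integrableExpSet (interior_subset ht))
  refine tendsto_one_div_mul_log_of_exp_bounds
    (.of_forall fun n => ENNReal.toReal_le_of_le_ofReal (exp_pos _).le (hupper n)) fun a ha => ?_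
  have hcont : ContinuousAt (fun s => cgf X μ s - s * deriv (cgf X μ) s) t :=
    (analyticAt_cgf ht).continuousAt.sub
      (continuousAt_id.mul (analyticAt_cgf ht).deriv.continuousAt)
  obtain ⟨s, ⟨has, hs⟩, hst⟩ := ((((hcont.eventually_const_lt ha).and
    (isOpen_interior.eventually_mem ht)).filter_mono nhdsWithin_le_nhds).and
      (eventually_deriv_cgf_lt ht hX)).exists
  filter_upwards [eventually_ofReal_exp_le_measure_pi_sum_le hs hst has] with n hn
  exact (ENNReal.ofReal_le_iff_le_toReal (ne_top_of_le_ne_top ofReal_ne_top (hupper n))).1 hn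

theorem stmt7_general [SigmaFinite μ] {V : Ω → ℝ} {α R : ℝ}
    (hα : α ∈ interior (integrableExpSet V μ)) (hα0 : α ≤ 0) (hV : ¬ V =ᵐ[μ] fun _ => R)
    (hαeq : ∫ x, V x * exp (α * V x) ∂μ = R * ∫ x, exp (α * V x) ∂μ) :
    Tendsto (fun n : ℕ => 1 / (n : ℝ) *
        log (Measure.pi (fun _ : Fin n => μ) {x | ∑ i, V (x i) ≤ R * n}).toReal)
      atTop (𝓝 (cgf V μ α - α * R)) ∧
    IsLeast ((fun s => cgf V μ s - s * R) '' integrableExpSet V μ) (cgf V μ α - α * R) := by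
  have hμ : μ ≠ 0 := by rintro rfl; simp [EventuallyEq] at hV
  obtain rfl : deriv (cgf V μ) α = R := by
    rw [deriv_cgf hα, hαeq]
    exact mul_div_cancel_right₀ R
      (mgf_pos' hμ (integrable_of_mem_integrableExpSet (interior_subset hα))).ne'
  refine ⟨tendsto_log_measure_pi_sum_le hα hα0 hV, ⟨α, interior_subset hα, rfl⟩, ?_⟩
  rintro _ ⟨s, hs, rfl⟩
  have := cgf_add_mul_deriv_le hα hs
  simp only [tsub_le_iff_right]
  linarith

end Cramer

theorem integrable_exp_mul_abs_of_neg {b : ℝ} (hb : b < 0) :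
    Integrable fun x : ℝ => exp (b * |x|) := by
  simp_rw [← norm_eq_abs]
  rw [integrable_fun_norm_addHaar volume (f := fun y => exp (b * y))]
  simpa using integrableOn_exp_mul_Ioi hb 0

namespace IsOrlicz

open ProbabilityTheory

variable {V : ℝ → ℝ}

theorem continuous (hV : IsOrlicz V) : Continuous V :=
  continuousOn_univ.1 (hV.1.continuousOn isOpen_univ)

theorem not_ae_eq_const (hV : IsOrlicz V) {R : ℝ} (hR : R ≠ 0) : ¬ V =ᵐ[volume] fun _ => R := by
  intro h
  have hconst := (hV.continuous.ae_eq_iff_eq volume continuous_const).1 h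
  exact hR (by simpa [hV.2.2.1] using (congrFun hconst 0).symm)

theorem mul_abs_sub_one_le (hV : IsOrlicz V) (x : ℝ) : V 1 * (|x| - 1) ≤ V x := by
  obtain ⟨hconvex, hsymm, hzero, -, hnonneg⟩ := hV
  have habs : V |x| = V x := by
    rcases abs_choice x with h | h <;> rw [h]
    exact hsymm x
  rcases le_total |x| 1 with h | h
  · exact (mul_nonpos_of_nonneg_of_nonpos (hnonneg 1) (sub_nonpos.2 h)).trans (hnonneg x)
  · have hslope := hconvex.secant_mono (a := 0) (x := 1) (y := |x|) trivial trivial trivial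
      one_ne_zero (by positivity) h
    rw [hzero, habs, sub_zero, sub_zero, div_one, sub_zero, sub_zero,
      le_div_iff₀ (by positivity)] at hslope
    linarith [hnonneg 1]

theorem integrable_exp_mul (hV : IsOrlicz V) {α : ℝ} (hα : α < 0) :
    Integrable fun x => exp (α * V x) := by
  have hV1 : 0 < V 1 := hV.2.2.2.1 1 one_ne_zero
  refine ((integrable_exp_mul_abs_of_neg (mul_neg_of_neg_of_pos hα hV1)).const_mul
    (exp (-(α * V 1)))).mono'
    (continuous_exp.comp (hV.continuous.const_mul α)).aestronglyMeasurable (ae_of_all _ fun x => ?_)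
  rw [norm_eq_abs, abs_exp, ← exp_add, exp_le_exp]
  linear_combination mul_le_mul_of_nonpos_left (hV.mul_abs_sub_one_le x) hα.le

theorem not_integrable_exp_mul (hV : IsOrlicz V) {α : ℝ} (hα : 0 ≤ α) :
    ¬ Integrable fun x => exp (α * V x) := by
  intro h_int
  have hone : Integrable fun _ : ℝ => (1 : ℝ) :=
    h_int.mono' aestronglyMeasurable_const (ae_of_all _ fun x => by
      simpa using mul_nonneg hα (hV.2.2.2.2 x))
  simp [integrable_const_iff, isFiniteMeasure_iff] at hone

theorem integrableExpSet_eq_Iio (hV : IsOrlicz V) : integrableExpSet V volume = Set.Iio 0 :=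
  Set.Subset.antisymm (fun _ hα => not_le.1 fun h => hV.not_integrable_exp_mul h hα)
    fun _ hα => hV.integrable_exp_mul hα

end IsOrlicz

/-- `(1/n) log vol_n(B_R^{n,V}) → inf_{α<0} [log ∫ e^{αV} - αR]`, and the infimum is
attained at (and equals the value at) the unique `ᾱ < 0` solving
`∫ V e^{ᾱV} = R ∫ e^{ᾱV}`. -/
theorem stmt7 (V : ℝ → ℝ) (hV : IsOrlicz V) (R : ℝ) (hR : 0 < R)
    (αb : ℝ) (hαb : αb < 0)
    (hαbeq : (∫ x : ℝ, V x * Real.exp (αb * V x)) = R * ∫ x : ℝ, Real.exp (αb * V x))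
    (hαbuniq : ∀ α' : ℝ, α' < 0 →
      (∫ x : ℝ, V x * Real.exp (α' * V x)) = R * ∫ x : ℝ, Real.exp (α' * V x) → α' = αb) :
    Tendsto (fun n : ℕ =>
        (1 / (n : ℝ)) * Real.log ((volume (OrliczBall V R n)).toReal))
      atTop (nhds (phiV0 V αb - αb * R)) ∧
    IsGLB ((fun α : ℝ => phiV0 V α - α * R) '' Set.Iio (0 : ℝ)) (phiV0 V αb - αb * R) := by
  rw [← hV.integrableExpSet_eq_Iio]
  have hmem : αb ∈ interior (ProbabilityTheory.integrableExpSet V volume) := by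
    rwa [hV.integrableExpSet_eq_Iio, interior_Iio]
  exact (stmt7_general hmem hαb.le (hV.not_ae_eq_const hR.ne') hαbeq).imp_right IsLeast.isGLB
end
end
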